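/- arXiv:1604.04809 — 2 statements merged into one kernel-verified Lean document; each statement's English description precedes it below -/
import Mathlib

section
/- There is a constant c (independent of the game) such that every coordination game on a weighted simple cycle on n nodes in which at most two nodes have a non-zero bonus admits, from every joint strategy, a finite improvement path of length at most c·n (hence ending in a Nash equilibrium). -/
open scoped Classical

namespace CG

/-- Payoff of node `i` in a coordination game on a weighted directed graph
with adjacency `adj` (an edge `j → i` is `adj j i`), edge weights `w`,
bonuses `β`, under the joint strategy `s`. -/
noncomputable def payoff {V M : Type} [Fintype V] (adj : V → V → Prop)
    (w : V → V → ℝ) (β : V → M → ℕ) (s : V → M) (i : V) : ℝ :=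
  (∑ j ∈ Finset.univ.filter (fun j => adj j i ∧ s j = s i), w j i) + (β i (s i) : ℝ)

/-- A joint strategy assigns to every node a colour from its colour set. -/
def Valid {V M : Type} (C : V → Finset M) (s : V → M) : Prop :=
  ∀ i, s i ∈ C i

/-- `s'` is a profitable deviation of the (non-empty) coalition
`K = {i | s i ≠ s' i}` from `s`. -/
def ProfDev {V M : Type} [Fintype V] (adj : V → V → Prop) (w : V → V → ℝ)
    (β : V → M → ℕ) (C : V → Finset M) (s s' : V → M) : Prop :=
  Valid C s' ∧ s ≠ s' ∧
    ∀ i, s i ≠ s' i → payoff adj w β s i < payoff adj w β s' i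

/-- A profitable deviation of a single player. -/
def UniDev {V M : Type} [Fintype V] (adj : V → V → Prop) (w : V → V → ℝ)
    (β : V → M → ℕ) (C : V → Finset M) (s s' : V → M) : Prop :=
  ProfDev adj w β C s s' ∧ ∃ i, ∀ j, j ≠ i → s j = s' j

/-- A Nash equilibrium: no single player has a profitable deviation. -/
def IsNash {V M : Type} [Fintype V] (adj : V → V → Prop) (w : V → V → ℝ)
    (β : V → M → ℕ) (C : V → Finset M) (s : V → M) : Prop :=
  Valid C s ∧ ∀ s', ¬ UniDev adj w β C s s'

/-- A strong equilibrium: no coalition has a profitable deviation. -/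
def IsStrong {V M : Type} [Fintype V] (adj : V → V → Prop) (w : V → V → ℝ)
    (β : V → M → ℕ) (C : V → Finset M) (s : V → M) : Prop :=
  Valid C s ∧ ∀ s', ¬ ProfDev adj w β C s s'

/-- There is a finite improvement path of length `L` starting at `s`
(each step a profitable single-player deviation) ending in a Nash equilibrium. -/
def ImpPath {V M : Type} [Fintype V] (adj : V → V → Prop) (w : V → V → ℝ)
    (β : V → M → ℕ) (C : V → Finset M) (s : V → M) (L : ℕ) : Prop :=
  ∃ σ : ℕ → V → M, σ 0 = s ∧
    (∀ t, t < L → UniDev adj w β C (σ t) (σ (t + 1))) ∧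
    IsNash adj w β C (σ L)

/-- There is a finite c-improvement path of length `L` starting at `s`
(each step a profitable coalition deviation) ending in a strong equilibrium. -/
def CImpPath {V M : Type} [Fintype V] (adj : V → V → Prop) (w : V → V → ℝ)
    (β : V → M → ℕ) (C : V → Finset M) (s : V → M) (L : ℕ) : Prop :=
  ∃ σ : ℕ → V → M, σ 0 = s ∧
    (∀ t, t < L → ProfDev adj w β C (σ t) (σ (t + 1))) ∧
    IsStrong adj w β C (σ L)

/-- Adjacency of the simple cycle `1 → 2 → ⋯ → n → 1` on `Fin n`. -/
def cycAdj (n : ℕ) : Fin n → Fin n → Prop :=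
  fun i j => (i.val + 1) % n = j.val

theorem comb {M : Type} (f g : M → M) (a b : M) (p q : ℕ → M)
    (fa : ∀ x, f x = x ∨ f x = a) (gb : ∀ x, g x = x ∨ g x = b)
    (h1 : ∀ k, 1 ≤ k → k ≤ 8 → q k = g (p k))
    (h2 : ∀ k, 1 ≤ k → k ≤ 8 → p (k + 1) = f (q k))
    (h3 : ∀ k, k ≤ 8 → p (k + 1) ≠ p k)
    (h4 : ∀ k, k ≤ 8 → q (k + 1) ≠ q k) : False := by
  have faa : f a = a := by rcases fa a with h | h <;> exact h
  have gbb : g b = b := by rcases gb b with h | h <;> exact h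
  -- p never equals a
  have pa : ∀ k, 1 ≤ k → k ≤ 6 → p k ≠ a := by
    intro k hk1 hk2 h
    have e1 := h1 k hk1 (by omega)
    have e2 := h2 k hk1 (by omega)
    have e3 := h1 (k + 1) (by omega) (by omega)
    have n1 := h3 k (by omega)
    have n2 := h4 k (by omega)
    rw [h] at e1 n1
    rcases gb a with hg | hg
    · rw [e1, hg, faa] at e2; exact n1 e2
    · rw [hg] at e1
      rw [e1] at e2 n2
      rcases fa b with hf | hf
      · rw [hf] at e2; rw [e2, gbb] at e3; exact n2 e3
      · rw [hf] at e2; exact n1 e2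
  have pq : ∀ k, 1 ≤ k → k ≤ 5 → p (k + 1) = q k := by
    intro k hk1 hk2
    have e2 := h2 k hk1 (by omega)
    rcases fa (q k) with h | h
    · rw [e2, h]
    · exact absurd (e2.trans h) (pa (k + 1) (by omega) (by omega))
  have qb : ∀ k, 1 ≤ k → k ≤ 5 → q k = b := by
    intro k hk1 hk2
    have e1 := h1 k hk1 (by omega)
    rcases gb (p k) with h | h
    · exact absurd ((pq k hk1 hk2).trans (e1.trans h)) (h3 k (by omega))
    · rw [e1, h]
  exact h4 1 (by omega) ((qb 2 (by omega) (by omega)).trans (qb 1 (by omega) (by omega)).symm)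

section helpers

variable {n : ℕ} {M : Type}

/-- node visited at time `t` -/
def nd (hn : 2 ≤ n) (t : ℕ) : Fin n := ⟨t % n, Nat.mod_lt _ (by omega)⟩

/-- predecessor on the cycle -/
def pd (hn : 2 ≤ n) (i : Fin n) : Fin n := ⟨(i.val + n - 1) % n, Nat.mod_lt _ (by omega)⟩

theorem mod_ne {n r t : ℕ} (h1 : r < t) (h2 : t < r + n) : t % n ≠ r % n := by
  intro h
  have h3 := Nat.sub_mod_eq_zero_of_mod_eq h
  have h4 := Nat.le_of_dvd (by omega) (Nat.dvd_of_mod_eq_zero h3)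
  omega

theorem nd_ne (hn : 2 ≤ n) {r t : ℕ} (h1 : r < t) (h2 : t < r + n) : nd hn t ≠ nd hn r := by
  intro h
  exact mod_ne h1 h2 (congrArg Fin.val h)

theorem nd_add (hn : 2 ≤ n) (t : ℕ) : nd hn (t + n) = nd hn t := by
  simp [nd]

theorem pd_nd (hn : 2 ≤ n) (t : ℕ) : pd hn (nd hn t) = nd hn (t + n - 1) := by
  apply Fin.ext
  simp only [pd, nd]
  have h1 : t % n + n - 1 = t % n + (n - 1) := by omega
  have h2 : t + n - 1 = t + (n - 1) := by omega
  rw [h1, h2]; simp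

theorem nd_val (hn : 2 ≤ n) (i : Fin n) : nd hn i.val = i := by
  apply Fin.ext; exact Nat.mod_eq_of_lt i.isLt

theorem pd_ne (hn : 2 ≤ n) (i : Fin n) : pd hn i ≠ i := by
  rw [← nd_val hn i, pd_nd]
  exact nd_ne hn (by omega) (by omega)

theorem adj_iff (hn : 2 ≤ n) (j i : Fin n) : cycAdj n j i ↔ j = pd hn i := by
  have hi := i.isLt
  have hj := j.isLt
  simp only [cycAdj, pd, Fin.ext_iff]
  rcases Nat.lt_or_ge (j.val + 1) n with h | h
  · rw [Nat.mod_eq_of_lt h]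
    rcases Nat.eq_zero_or_pos i.val with h0 | h0
    · rw [h0, Nat.mod_eq_of_lt (by omega)]; omega
    · have : i.val + n - 1 = (i.val - 1) + n := by omega
      rw [this, Nat.add_mod_right, Nat.mod_eq_of_lt (by omega)]; omega
  · have : j.val + 1 = n := by omega
    rw [this, Nat.mod_self]
    rcases Nat.eq_zero_or_pos i.val with h0 | h0
    · rw [h0, Nat.mod_eq_of_lt (by omega)]; omega
    · have : i.val + n - 1 = (i.val - 1) + n := by omega
      rw [this, Nat.add_mod_right, Nat.mod_eq_of_lt (by omega)]; omega

/-- payoff of colour `c` at node `i` when the predecessor plays `x` -/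
noncomputable def val (hn : 2 ≤ n) (w : Fin n → Fin n → ℝ) (β : Fin n → M → ℕ) (i : Fin n)
    (x c : M) : ℝ := (if x = c then w (pd hn i) i else 0) + (β i c : ℝ)

theorem payoff_eq (hn : 2 ≤ n) (w : Fin n → Fin n → ℝ) (β : Fin n → M → ℕ) (s : Fin n → M)
    (i : Fin n) : payoff (cycAdj n) w β s i = val hn w β i (s (pd hn i)) (s i) := by
  unfold payoff val
  congr 1
  split_ifs with h
  · have : Finset.univ.filter (fun j => cycAdj n j i ∧ s j = s i) = {pd hn i} := by
      ext j
      simp only [Finset.mem_filter, Finset.mem_univ, true_and, Finset.mem_singleton, adj_iff hn]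
      constructor
      · exact fun h => h.1
      · rintro rfl; exact ⟨rfl, h⟩
    rw [this, Finset.sum_singleton]
  · apply Finset.sum_eq_zero
    intro j hj
    simp only [Finset.mem_filter, Finset.mem_univ, true_and, adj_iff hn] at hj
    exact absurd (hj.1 ▸ hj.2) h

/-- `c` is a best response to `x` at `i` -/
def BR (hn : 2 ≤ n) (w : Fin n → Fin n → ℝ) (β : Fin n → M → ℕ) (C : Fin n → Finset M)
    (i : Fin n) (x c : M) : Prop :=
  c ∈ C i ∧ ∀ z ∈ C i, val hn w β i x z ≤ val hn w β i x c

/-- reset value -/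
noncomputable def ff (hn : 2 ≤ n) (w : Fin n → Fin n → ℝ) (β : Fin n → M → ℕ)
    (C : Fin n → Finset M) (y : Fin n → M) (i : Fin n) (x : M) : M :=
  if BR hn w β C i x x then x else y i

/-- new colour -/
noncomputable def upd (hn : 2 ≤ n) (w : Fin n → Fin n → ℝ) (β : Fin n → M → ℕ)
    (C : Fin n → Finset M) (y : Fin n → M) (i : Fin n) (x c : M) : M :=
  if BR hn w β C i x c then c else ff hn w β C y i x

theorem upd_BR (hn : 2 ≤ n) (w : Fin n → Fin n → ℝ) (hw : ∀ i j, cycAdj n i j → 0 ≤ w i j)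
    (β : Fin n → M → ℕ) (C : Fin n → Finset M) (y : Fin n → M)
    (hy : ∀ i, y i ∈ C i ∧ ∀ z ∈ C i, β i z ≤ β i (y i)) (i : Fin n) (x c : M) :
    BR hn w β C i x (upd hn w β C y i x c) := by
  unfold upd
  split_ifs with h1
  · exact h1
  unfold ff
  split_ifs with h2
  · exact h2
  have hw0 : 0 ≤ w (pd hn i) i := hw _ _ ((adj_iff hn _ _).2 rfl)
  have key : ∀ z ∈ C i, (β i z : ℝ) ≤ val hn w β i x (y i) := by
    intro z hz
    have : (β i z : ℝ) ≤ β i (y i) := by exact_mod_cast (hy i).2 z hz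
    unfold val
    split_ifs <;> linarith
  refine ⟨(hy i).1, fun z hz => ?_⟩
  by_cases hx : x = z
  · subst hx
    have : ∃ z ∈ C i, val hn w β i x x < val hn w β i x z := by
      by_contra hcon
      push Not at hcon
      exact h2 ⟨hz, hcon⟩
    obtain ⟨z', hz', hlt⟩ := this
    have hne : x ≠ z' := by rintro rfl; exact lt_irrefl _ hlt
    have h3 : val hn w β i x z' = β i z' := by simp [val, hne]
    have := key z' hz'
    linarith
  · have h3 : val hn w β i x z = β i z := by simp [val, hx]
    rw [h3]; exact key z hz

theorem upd_nb (hn : 2 ≤ n) (w : Fin n → Fin n → ℝ) (hw : ∀ i j, cycAdj n i j → 0 ≤ w i j)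
    (β : Fin n → M → ℕ) (C : Fin n → Finset M) (y : Fin n → M)
    (i : Fin n) (hi : ∀ z, β i z = 0) (x c : M) (hc : c ∈ C i)
    (hne : upd hn w β C y i x c ≠ c) : upd hn w β C y i x c = x := by
  have hw0 : 0 ≤ w (pd hn i) i := hw _ _ ((adj_iff hn _ _).2 rfl)
  unfold upd at *
  split_ifs at * with h1
  · exact absurd rfl hne
  have : ∃ z ∈ C i, val hn w β i x c < val hn w β i x z := by
    by_contra hcon
    push Not at hcon
    exact h1 ⟨hc, hcon⟩
  obtain ⟨z, hz, hlt⟩ := this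
  have hv0 : 0 ≤ val hn w β i x c := by
    unfold val; split_ifs <;> simp [hw0, hi]
  have hxz : x = z := by
    by_contra hxz
    have : val hn w β i x z = 0 := by simp [val, hxz, hi]
    linarith
  subst hxz
  unfold ff
  rw [if_pos]
  refine ⟨hz, fun z _ => ?_⟩
  unfold val
  split_ifs <;> simp_all

theorem upd_ne (hn : 2 ≤ n) (w : Fin n → Fin n → ℝ)
    (β : Fin n → M → ℕ) (C : Fin n → Finset M) (y : Fin n → M)
    (i : Fin n) (x c : M)
    (hne : upd hn w β C y i x c ≠ c) : upd hn w β C y i x c = ff hn w β C y i x := by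
  unfold upd at *
  split_ifs at * with h1
  · exact absurd rfl hne
  · rfl

theorem upd_dev (hn : 2 ≤ n) (w : Fin n → Fin n → ℝ) (hw : ∀ i j, cycAdj n i j → 0 ≤ w i j)
    (β : Fin n → M → ℕ) (C : Fin n → Finset M) (y : Fin n → M)
    (hy : ∀ i, y i ∈ C i ∧ ∀ z ∈ C i, β i z ≤ β i (y i)) (i : Fin n) (s : Fin n → M)
    (hs : Valid C s) (hne : upd hn w β C y i (s (pd hn i)) (s i) ≠ s i) :
    UniDev (cycAdj n) w β C s
      (Function.update s i (upd hn w β C y i (s (pd hn i)) (s i))) := by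
  have hbr := upd_BR hn w hw β C y hy i (s (pd hn i)) (s i)
  have hnb : ¬ BR hn w β C i (s (pd hn i)) (s i) := by
    intro h; exact hne (by simp [upd, h])
  generalize upd hn w β C y i (s (pd hn i)) (s i) = c at *
  have : ∃ z ∈ C i, val hn w β i (s (pd hn i)) (s i) < val hn w β i (s (pd hn i)) z := by
    by_contra hcon
    push Not at hcon
    exact hnb ⟨hs i, hcon⟩
  obtain ⟨z, hz, hlt⟩ := this
  refine ⟨⟨?_, ?_, ?_⟩, i, ?_⟩
  · intro j
    by_cases hj : j = i
    · subst hj; simpa using hbr.1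
    · simpa [hj] using hs j
  · intro h
    have := congrFun h i
    simp at this
    exact hne this.symm
  · intro j hj
    have hji : j = i := by
      by_contra h; simp [h] at hj
    subst hji
    rw [payoff_eq hn, payoff_eq hn]
    rw [Function.update_of_ne (pd_ne hn j), Function.update_self]
    exact lt_of_lt_of_le hlt (hbr.2 z hz)
  · intro j hj; simp [hj]

theorem nash_of_BR (hn : 2 ≤ n) (w : Fin n → Fin n → ℝ) (β : Fin n → M → ℕ)
    (C : Fin n → Finset M) (s : Fin n → M)
    (h : ∀ i, BR hn w β C i (s (pd hn i)) (s i)) : IsNash (cycAdj n) w β C s := by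
  refine ⟨fun i => (h i).1, ?_⟩
  rintro s' ⟨⟨hv, hne, hp⟩, i, hi⟩
  have hsi : s i ≠ s' i := by
    intro he
    apply hne
    funext j
    by_cases hj : j = i
    · rw [hj, he]
    · exact hi j hj
  have h1 := hp i hsi
  rw [payoff_eq hn, payoff_eq hn, ← hi _ (pd_ne hn i)] at h1
  exact absurd ((h i).2 _ (hv i)) (not_le.2 h1)

theorem path_of_seq {V M : Type} [Fintype V] (adj : V → V → Prop) (w : V → V → ℝ)
    (β : V → M → ℕ) (C : V → Finset M) (T : ℕ) : ∀ τ : ℕ → V → M,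
    (∀ t, τ (t + 1) = τ t ∨ UniDev adj w β C (τ t) (τ (t + 1))) →
    IsNash adj w β C (τ T) → ∃ L, L ≤ T ∧ ImpPath adj w β C (τ 0) L := by
  induction T with
  | zero =>
    intro τ _ hN
    exact ⟨0, le_refl _, fun _ => τ 0, rfl, by simp, hN⟩
  | succ T ih =>
    intro τ hτ hN
    obtain ⟨L, hL, σ, h0, h1, h2⟩ := ih (fun t => τ (t + 1)) (fun t => hτ (t + 1)) hN
    rcases hτ 0 with h | h
    · refine ⟨L, by omega, σ, ?_, h1, h2⟩
      rw [h0, ← h]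
    · refine ⟨L + 1, by omega, fun t => Nat.casesOn t (τ 0) σ, rfl, ?_, h2⟩
      intro t ht
      cases t with
      | zero => simpa [h0] using h
      | succ t => exact h1 t (by omega)

/-- the round-robin sequence -/
noncomputable def run (hn : 2 ≤ n) (w : Fin n → Fin n → ℝ) (β : Fin n → M → ℕ)
    (C : Fin n → Finset M) (y : Fin n → M) (s : Fin n → M) : ℕ → Fin n → M
  | 0 => s
  | t + 1 => Function.update (run hn w β C y s t) (nd hn t)
      (upd hn w β C y (nd hn t) (run hn w β C y s t (pd hn (nd hn t)))
        (run hn w β C y s t (nd hn t)))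

theorem main_aux (hn : 2 ≤ n) (w : Fin n → Fin n → ℝ) (hw : ∀ i j, cycAdj n i j → 0 ≤ w i j)
    (β : Fin n → M → ℕ) (a b : Fin n) (hab : a < b)
    (hb : ∀ i, i ≠ a → i ≠ b → ∀ z, β i z = 0)
    (C : Fin n → Finset M) (hC : ∀ i, (C i).Nonempty) (s : Fin n → M) (hs : Valid C s) :
    ∃ L, L ≤ 10 * n ∧ ImpPath (cycAdj n) w β C s L := by
  have : ∀ i, ∃ y, y ∈ C i ∧ ∀ z ∈ C i, β i z ≤ β i y := fun i => by
    obtain ⟨y, h1, h2⟩ := Finset.exists_max_image (C i) (β i) (hC i)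
    exact ⟨y, h1, h2⟩
  choose y hy using this
  set τ := run hn w β C y s with hτ
  have τs : ∀ t, τ (t + 1) = Function.update (τ t) (nd hn t)
      (upd hn w β C y (nd hn t) (τ t (pd hn (nd hn t))) (τ t (nd hn t))) := fun t => rfl
  have τ0 : τ 0 = s := rfl
  clear_value τ
  have hval : ∀ t, Valid C (τ t) := by
    intro t
    induction t with
    | zero => rw [τ0]; exact hs
    | succ t ih =>
      intro i
      rw [τs]
      by_cases h : i = nd hn t
      · subst h
        rw [Function.update_self]
        exact (upd_BR hn w hw β C y hy _ _ _).1
      · rw [Function.update_of_ne h]; exact ih i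
  have hstep : ∀ t, τ (t + 1) = τ t ∨ UniDev (cycAdj n) w β C (τ t) (τ (t + 1)) := by
    intro t
    by_cases h : upd hn w β C y (nd hn t) (τ t (pd hn (nd hn t))) (τ t (nd hn t)) = τ t (nd hn t)
    · left; rw [τs, h, Function.update_eq_self]
    · right; rw [τs]; exact upd_dev hn w hw β C y hy _ _ (hval t) h
  have hinv : ∀ t r, r < t → t < r + n →
      BR hn w β C (nd hn r) (τ t (pd hn (nd hn r))) (τ t (nd hn r)) := by
    intro t
    induction t with
    | zero => intro r h; omega
    | succ t ih =>
      intro r h1 h2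
      by_cases hr : r = t
      · subst hr
        rw [τs, Function.update_of_ne (pd_ne hn _), Function.update_self]
        exact upd_BR hn w hw β C y hy _ _ _
      · have h3 := ih r (by omega) (by omega)
        rw [τs, Function.update_of_ne, Function.update_of_ne]
        · exact h3
        · exact (nd_ne hn (by omega) (by omega)).symm
        · rw [pd_nd]; exact nd_ne hn (by omega) (by omega)
  -- it suffices to find a stationary step
  suffices hst : ∃ t, n ≤ t ∧ t < 10 * n ∧ τ (t + 1) = τ t by
    obtain ⟨t, h1, h2, h3⟩ := hst
    have hN : IsNash (cycAdj n) w β C (τ t) := by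
      apply nash_of_BR hn
      intro i
      have hex : ∃ r, r < t + 1 ∧ t < r + n ∧ nd hn r = i := by
        have hm := Nat.mod_lt t (show 0 < n by omega)
        have hd := Nat.div_add_mod t n
        have hi := i.isLt
        by_cases hle : i.val ≤ t % n
        · refine ⟨n * (t / n) + i.val, by omega, by omega, Fin.ext ?_⟩
          simp [nd, Nat.mod_eq_of_lt hi]
        · have h4 : 1 ≤ t / n := Nat.div_pos h1 (by omega)
          obtain ⟨q, hq⟩ : ∃ q, t / n = q + 1 := ⟨t / n - 1, by omega⟩
          rw [hq, Nat.mul_add] at hd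
          refine ⟨n * q + i.val, by omega, by omega, Fin.ext ?_⟩
          simp [nd, Nat.mod_eq_of_lt hi]
      obtain ⟨r, hr1, hr2, rfl⟩ := hex
      by_cases hr : r = t
      · subst hr
        have h5 := hinv (r + 1) r (by omega) (by omega)
        rwa [h3] at h5
      · exact hinv t r (by omega) (by omega)
    obtain ⟨L, hL, hp⟩ := path_of_seq (cycAdj n) w β C t τ hstep hN
    rw [τ0] at hp
    exact ⟨L, by omega, hp⟩
  by_contra hcon
  push Not at hcon
  obtain ⟨v, hv⟩ : ∃ v : ℕ → M, ∀ t, v t = τ (t + 1) (nd hn t) := ⟨_, fun t => rfl⟩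
  have hvt : ∀ t, v t = upd hn w β C y (nd hn t) (τ t (pd hn (nd hn t))) (τ t (nd hn t)) := by
    intro t; rw [hv, τs, Function.update_self]
  have hkeep : ∀ r j, j < n → τ (r + 1 + j) (nd hn r) = v r := by
    intro r j
    induction j with
    | zero => intro _; exact (hv r).symm
    | succ j ih =>
      intro hj
      rw [← ih (by omega), ← add_assoc, τs, Function.update_of_ne]
      exact (nd_ne hn (by omega) (by omega)).symm
  have hself : ∀ t, τ (t + n) (nd hn (t + n)) = v t := by
    intro t
    have h := hkeep t (n - 1) (by omega)
    rw [nd_add, ← h]; congr 1; omega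
  have hpred : ∀ t, τ (t + 1) (pd hn (nd hn (t + 1))) = v t := by
    intro t
    have h : t + 1 + n - 1 = t + n := by omega
    rw [pd_nd, h, nd_add, hv]
  have hmove : ∀ t, t + n < 10 * n → v (t + n) ≠ v t := by
    intro t ht h
    apply hcon (t + n) (by omega) ht
    rw [τs, ← hvt, h, ← hself, Function.update_eq_self]
  have hf : ∀ t, n ≤ t + 1 → t + 1 < 10 * n →
      v (t + 1) = ff hn w β C y (nd hn (t + 1)) (v t) := by
    intro t h1 h2
    have h3 := hmove (t + 1 - n) (by omega)
    have h4 := hself (t + 1 - n)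
    rw [Nat.sub_add_cancel h1] at h3 h4
    have h5 := hvt (t + 1)
    rw [hpred, h4] at h5
    rw [h5] at h3
    rw [h5]
    exact upd_ne hn w β C y _ _ _ h3
  have hid : ∀ t, n ≤ t + 1 → t + 1 < 10 * n → nd hn (t + 1) ≠ a → nd hn (t + 1) ≠ b →
      v (t + 1) = v t := by
    intro t h1 h2 ha' hb'
    have h3 := hmove (t + 1 - n) (by omega)
    have h4 := hself (t + 1 - n)
    rw [Nat.sub_add_cancel h1] at h3 h4
    have h5 := hvt (t + 1)
    rw [hpred, h4] at h5
    rw [h5] at h3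
    rw [h5]
    refine upd_nb hn w hw β C y _ (hb _ ha' hb') _ _ ?_ h3
    rw [← h4]; exact hval _ _
  have hA := a.isLt
  have hB := b.isLt
  have hab' : a.val < b.val := hab
  have nda : ∀ k, nd hn (n * k + a.val) = a := fun k => by
    apply Fin.ext; simp [nd, Nat.mod_eq_of_lt hA]
  have ndb : ∀ k, nd hn (n * k + b.val) = b := fun k => by
    apply Fin.ext; simp [nd, Nat.mod_eq_of_lt hB]
  have c1 : ∀ k, 1 ≤ k → k ≤ 8 → ∀ j, a.val + j < b.val →
      v (n * k + a.val + j) = v (n * k + a.val) := by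
    intro k hk1 hk2 j
    have e1 : n * 1 ≤ n * k := Nat.mul_le_mul_left n hk1
    have e2 : n * k ≤ n * 8 := Nat.mul_le_mul_left n hk2
    induction j with
    | zero => intro _; rfl
    | succ j ih =>
      intro hj
      rw [← ih (by omega), ← add_assoc]
      apply hid _ (by omega) (by omega)
      · exact fun h => nd_ne hn (by omega) (by omega) (h.trans (nda k).symm)
      · exact fun h => nd_ne hn (by omega) (by omega) ((ndb k).trans h.symm)
  have c2 : ∀ k, 1 ≤ k → k ≤ 8 → ∀ j, b.val + j < a.val + n →
      v (n * k + b.val + j) = v (n * k + b.val) := by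
    intro k hk1 hk2 j
    have e1 : n * 1 ≤ n * k := Nat.mul_le_mul_left n hk1
    have e2 : n * k ≤ n * 8 := Nat.mul_le_mul_left n hk2
    induction j with
    | zero => intro _; rfl
    | succ j ih =>
      intro hj
      rw [← ih (by omega), ← add_assoc]
      apply hid _ (by omega) (by omega)
      · have e3 : n * (k + 1) = n * k + n := by ring
        exact fun h => nd_ne hn (by omega) (by omega) ((nda (k + 1)).trans h.symm)
      · exact fun h => nd_ne hn (by omega) (by omega) (h.trans (ndb k).symm)
  have hfab : ∀ k, 1 ≤ k → k ≤ 8 →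
      v (n * k + b.val) = ff hn w β C y b (v (n * k + a.val)) := by
    intro k hk1 hk2
    have e1 : n * 1 ≤ n * k := Nat.mul_le_mul_left n hk1
    have e2 : n * k ≤ n * 8 := Nat.mul_le_mul_left n hk2
    have h := hf (n * k + (b.val - 1)) (by omega) (by omega)
    have h' := c1 k hk1 hk2 (b.val - 1 - a.val) (by omega)
    rw [show n * k + (b.val - 1) + 1 = n * k + b.val by omega, ndb] at h
    rw [show n * k + a.val + (b.val - 1 - a.val) = n * k + (b.val - 1) by omega] at h'
    rw [h, h']
  have hfba : ∀ k, 1 ≤ k → k ≤ 8 →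
      v (n * (k + 1) + a.val) = ff hn w β C y a (v (n * k + b.val)) := by
    intro k hk1 hk2
    have e1 : n * 1 ≤ n * k := Nat.mul_le_mul_left n hk1
    have e2 : n * k ≤ n * 8 := Nat.mul_le_mul_left n hk2
    have e3 : n * (k + 1) = n * k + n := by ring
    have h := hf (n * (k + 1) + a.val - 1) (by omega) (by omega)
    have h' := c2 k hk1 hk2 (n + a.val - 1 - b.val) (by omega)
    rw [show n * (k + 1) + a.val - 1 + 1 = n * (k + 1) + a.val by omega, nda] at h
    rw [show n * k + b.val + (n + a.val - 1 - b.val) = n * (k + 1) + a.val - 1 by omega] at h'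
    rw [h, h']
  have ma : ∀ k, k ≤ 8 → v (n * (k + 1) + a.val) ≠ v (n * k + a.val) := by
    intro k hk
    have e2 : n * k ≤ n * 8 := Nat.mul_le_mul_left n hk
    have h := hmove (n * k + a.val) (by omega)
    rwa [show n * k + a.val + n = n * (k + 1) + a.val by ring] at h
  have mb : ∀ k, k ≤ 8 → v (n * (k + 1) + b.val) ≠ v (n * k + b.val) := by
    intro k hk
    have e2 : n * k ≤ n * 8 := Nat.mul_le_mul_left n hk
    have h := hmove (n * k + b.val) (by omega)
    rwa [show n * k + b.val + n = n * (k + 1) + b.val by ring] at h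
  have fa : ∀ x, ff hn w β C y a x = x ∨ ff hn w β C y a x = y a := fun x => by
    unfold ff; split_ifs <;> simp
  have fb : ∀ x, ff hn w β C y b x = x ∨ ff hn w β C y b x = y b := fun x => by
    unfold ff; split_ifs <;> simp
  generalize ff hn w β C y a = f at *
  generalize ff hn w β C y b = g at *
  obtain ⟨p, hp⟩ : ∃ p : ℕ → M, ∀ k, p k = v (n * k + a.val) := ⟨_, fun _ => rfl⟩
  obtain ⟨q, hq⟩ : ∃ q : ℕ → M, ∀ k, q k = v (n * k + b.val) := ⟨_, fun _ => rfl⟩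
  simp only [← hp, ← hq] at hfab hfba ma mb
  exact comb f g (y a) (y b) p q fa fb hfab hfba ma mb

end helpers

/-- There is a constant `c` such that every coordination game on a weighted
simple cycle on `n` nodes in which at most two nodes have a non-zero bonus
admits, from every joint strategy, a finite improvement path of length at most
`c * n` ending in a Nash equilibrium. -/
theorem weighted_cycle_two_bonuses_improvement_path :
    ∃ c : ℕ,
      ∀ (n : ℕ), 2 ≤ n →
      ∀ (M : Type) [Fintype M],
      ∀ (w : Fin n → Fin n → ℝ), (∀ i j, cycAdj n i j → 0 ≤ w i j) →
      ∀ (β : Fin n → M → ℕ),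
        (∃ a b : Fin n, ∀ i, (∃ col, β i col ≠ 0) → i = a ∨ i = b) →
      ∀ (C : Fin n → Finset M), (∀ i, (C i).Nonempty) →
      ∀ s : Fin n → M, Valid C s →
        ∃ L, L ≤ c * n ∧ ImpPath (cycAdj n) w β C s L := by
  refine ⟨10, ?_⟩
  intro n hn M _ w hw β hβ C hC s hs
  obtain ⟨a, b, hab⟩ := hβ
  have hz : ∀ i, i ≠ a → i ≠ b → ∀ z, β i z = 0 := by
    intro i h1 h2 z
    by_contra h
    rcases hab i ⟨z, h⟩ with h | h
    · exact h1 h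
    · exact h2 h
  rcases lt_trichotomy a b with h | h | h
  · exact main_aux hn w hw β a b h hz C hC s hs
  · subst h
    rcases lt_or_gt_of_ne (pd_ne hn a) with h | h
    · exact main_aux hn w hw β _ _ h (fun i _ h2 => hz i h2 h2) C hC s hs
    · exact main_aux hn w hw β _ _ h (fun i h1 _ => hz i h1 h1) C hC s hs
  · exact main_aux hn w hw β b a h (fun i h1 h2 => hz i h2 h1) C hC s hs


end CG
end

section
/- There is a constant c (independent of the game) such that every coordination game without bonuses on an unweighted open chain of m cycles, each cycle having n nodes, admits, from every joint strategy, a finite improvement path of length at most c·n·m² (hence ending in a Nash equilibrium). -/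
open scoped Classical

namespace CG

/-- Adjacency of a chain of `m` cycles, each of `n` nodes: `node j i` is the
`(i+1)`-st node of the `(j+1)`-st cycle (`0`-based indices). -/
def chainAdj {V : Type} (m n : ℕ) (node : ℕ → ℕ → V) : V → V → Prop :=
  fun u v => ∃ j i, j < m ∧ i < n ∧ u = node j i ∧ v = node j ((i + 1) % n)

/-- `node`, `k` describe an open chain of `m ≥ 2` simple cycles, each on `n ≥ 3`
nodes, where consecutive cycles `C_j, C_{j+1}` share exactly the node
`node j 0 = node (j+1) (k j)` (with `1 ≤ k j < n`) and the cycles are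
otherwise pairwise disjoint, and every vertex lies on some cycle. -/
def IsOpenChain {V : Type} (m n : ℕ) (node : ℕ → ℕ → V) (k : ℕ → ℕ) : Prop :=
  2 ≤ m ∧ 3 ≤ n ∧
  (∀ j, j + 1 < m → 1 ≤ k j ∧ k j < n) ∧
  (∀ j, j + 1 < m → node j 0 = node (j + 1) (k j)) ∧
  (∀ j i j' i', j < m → i < n → j' < m → i' < n → node j i = node j' i' →
      (j = j' ∧ i = i') ∨ (j' = j + 1 ∧ i = 0 ∧ i' = k j) ∨
      (j = j' + 1 ∧ i' = 0 ∧ i = k j')) ∧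
  (∀ v : V, ∃ j i, j < m ∧ i < n ∧ node j i = v)

/-- As `IsOpenChain`, but additionally the last cycle shares exactly the node
`node (m-1) 0 = node 0 (k (m-1))` with the first one. -/
def IsClosedChain {V : Type} (m n : ℕ) (node : ℕ → ℕ → V) (k : ℕ → ℕ) : Prop :=
  2 ≤ m ∧ 3 ≤ n ∧
  (∀ j, j < m → 1 ≤ k j ∧ k j < n) ∧
  (∀ j, j + 1 < m → node j 0 = node (j + 1) (k j)) ∧
  node (m - 1) 0 = node 0 (k (m - 1)) ∧
  (∀ j i j' i', j < m → i < n → j' < m → i' < n → node j i = node j' i' →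
      (j = j' ∧ i = i') ∨ (j' = j + 1 ∧ i = 0 ∧ i' = k j) ∨
      (j = j' + 1 ∧ i' = 0 ∧ i = k j') ∨
      (j = m - 1 ∧ j' = 0 ∧ i = 0 ∧ i' = k (m - 1)) ∨
      (j' = m - 1 ∧ j = 0 ∧ i' = 0 ∧ i = k (m - 1))) ∧
  (∀ v : V, ∃ j i, j < m ∧ i < n ∧ node j i = v)


section helper
variable {V M : Type}

def St (adj : V → V → Prop) (C : V → Finset M) (s : V → M) (v : V) : Prop :=
  (∃ u, adj u v ∧ s u = s v) ∨ ∀ u, adj u v → s u ∉ C v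

def Stp (adj : V → V → Prop) (C : V → Finset M) (s t : V → M) : Prop :=
  ∃ v u, adj u v ∧ (∀ w, adj w v → s w ≠ s v) ∧ s u ∈ C v ∧ t = Function.update s v (s u)

inductive Rch (adj : V → V → Prop) (C : V → Finset M) : ℕ → (V → M) → (V → M) → Prop
  | refl (B : ℕ) (s : V → M) : Rch adj C B s s
  | step (B : ℕ) (s t u : V → M) : Stp adj C s t → Rch adj C B t u → Rch adj C (B + 1) s u

variable {adj : V → V → Prop} {C : V → Finset M}

theorem Rch.trans {A B : ℕ} {s t u : V → M} (h1 : Rch adj C A s t) (h2 : Rch adj C B t u) :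
    Rch adj C (A + B) s u := by
  induction h1 with
  | refl A s =>
    have : ∀ (D : ℕ) (B : ℕ) (s u : V → M), Rch adj C B s u → Rch adj C (D + B) s u := by
      intro D B s u h
      induction h with
      | refl B s => exact Rch.refl _ _
      | step B s t u h _ ih => exact Rch.step _ _ _ _ h ih
    exact this A B s u h2
  | step A s t w h _ ih =>
    have := Rch.step _ _ _ _ h (ih h2)
    have e : A + 1 + B = A + B + 1 := by omega
    rw [e]; exact this

theorem Rch.mono {A B : ℕ} {s t : V → M} (h1 : Rch adj C A s t) (h : A ≤ B) :
    Rch adj C B s t := by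
  obtain ⟨D, rfl⟩ := Nat.exists_eq_add_of_le h
  exact h1.trans (Rch.refl D t)

theorem Rch.one {s t : V → M} (h : Stp adj C s t) : Rch adj C 1 s t :=
  Rch.step 0 s t t h (Rch.refl 0 t)

theorem St.congr {s s' : V → M} {v : V} (h : St adj C s v) (h0 : s' v = s v)
    (h1 : ∀ u, adj u v → s' u = s u) : St adj C s' v := by
  rcases h with ⟨u, hu, e⟩ | h
  · exact Or.inl ⟨u, hu, by rw [h1 u hu, h0, e]⟩
  · exact Or.inr fun u hu => by rw [h1 u hu]; exact h u hu

theorem not_St {s : V → M} {v : V} (h : ¬ St adj C s v) :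
    (∀ w, adj w v → s w ≠ s v) ∧ ∃ u, adj u v ∧ s u ∈ C v := by
  unfold St at h
  push Not at h
  exact h

def IsPth (adj : V → V → Prop) (f : ℕ → V) (l : ℕ) : Prop :=
  (∀ t, t < l → ∀ u, adj u (f (t + 1)) ↔ u = f t) ∧
  (∀ t u, t ≤ l → u ≤ l → f t = f u → t = u)

theorem sweep (f : ℕ → V) (l : ℕ) (hf : IsPth adj f l) (s : V → M) :
    ∃ s', Rch adj C l s s' ∧ (∀ v, (∀ t, 1 ≤ t → t ≤ l → v ≠ f t) → s' v = s v) ∧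
      (∀ t, 1 ≤ t → t ≤ l → St adj C s' (f t)) ∧
      ((∀ t, 2 ≤ t → t ≤ l → St adj C s (f t)) → s' (f l) = s (f l) ∨ s' (f l) = s (f 0)) := by
  induction l with
  | zero => exact ⟨s, Rch.refl _ _, fun _ _ => rfl, fun t h1 h2 => by omega, fun _ => Or.inl rfl⟩
  | succ l ih =>
    obtain ⟨hp, hi⟩ := hf
    obtain ⟨s1, hr, hoff, hst, hend⟩ := ih ⟨fun t ht => hp t (by omega),
      fun t u ht hu => hi t u (by omega) (by omega)⟩
    have hlast : s1 (f (l + 1)) = s (f (l + 1)) := by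
      apply hoff
      intro t h1 h2 h3
      have := hi _ _ (by omega) (by omega) h3
      omega
    have hpl := hp l (by omega)
    by_cases hS : St adj C s1 (f (l + 1))
    · refine ⟨s1, hr.mono (by omega), fun v hv => hoff v fun t h1 h2 => hv t h1 (by omega), ?_,
        fun _ => Or.inl hlast⟩
      intro t h1 h2
      rcases Nat.lt_or_ge l t with h | h
      · have : t = l + 1 := by omega
        rw [this]; exact hS
      · exact hst t h1 h
    · obtain ⟨hum, u, hu, huC⟩ := not_St hS
      have hul := (hpl u).1 hu
      subst hul
      have hne : ∀ t, t ≤ l → f t ≠ f (l + 1) := fun t ht h => by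
        have := hi _ _ (by omega) (by omega) h
        omega
      refine ⟨Function.update s1 (f (l + 1)) (s1 (f l)), hr.trans (Rch.one ⟨_, _, hu, hum, huC, rfl⟩),
        ?_, ?_, ?_⟩
      · intro v hv
        rw [Function.update_of_ne (hv (l + 1) (by omega) (by omega))]
        exact hoff v fun t h1 h2 => hv t h1 (by omega)
      · intro t h1 h2
        rcases Nat.lt_or_ge l t with h | h
        · have : t = l + 1 := by omega
          subst this
          refine Or.inl ⟨f l, hu, ?_⟩
          rw [Function.update_self, Function.update_of_ne (hne l le_rfl)]
        · refine (hst t h1 h).congr (Function.update_of_ne (hne t h) _ _) ?_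
          intro u hu
          obtain ⟨t, rfl⟩ : ∃ t', t = t' + 1 := ⟨t - 1, by omega⟩
          rw [(hp t (by omega) u).1 hu]
          exact Function.update_of_ne (hne t (by omega)) _ _
      · intro hs
        right
        rw [Function.update_self]
        rcases hend fun t h1 h2 => hs t h1 (by omega) with h | h
        · rcases Nat.eq_zero_or_pos l with h0 | h0
          · subst h0; exact h
          exfalso
          apply hS
          refine (hs (l + 1) (by omega) le_rfl).congr hlast ?_
          intro u hu
          rw [(hpl u).1 hu, h]
        · exact h

def Pp (adj : V → V → Prop) (C : V → Finset M) (S : Set V) (x : V) (B : ℕ) : Prop :=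
  ∀ s : V → M, (∀ v, v ∈ S → v ≠ x → St adj C s v) →
    ∃ s', Rch adj C B s s' ∧ (∀ v, v ∉ S → s' v = s v) ∧ ∀ v, v ∈ S → St adj C s' v

def Qp (adj : V → V → Prop) (C : V → Finset M) (S : Set V) (B : ℕ) : Prop :=
  ∀ s : V → M, 
    ∃ s', Rch adj C B s s' ∧ (∀ v, v ∉ S → s' v = s v) ∧ ∀ v, v ∈ S → St adj C s' v

/-- `S` is a left part with top `x`, whose outer predecessor is `r`. -/
structure Top (adj : V → V → Prop) (S : Set V) (x r : V) : Prop where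
  mem : x ∈ S
  cl : ∀ v, v ∈ S → v ≠ x → ∀ u, adj u v → u ∈ S
  top : ∀ u, adj u x → u ∈ S ∨ u = r
  adj_r : adj r x
  nr : r ∉ S

structure Base (adj : V → V → Prop) (S : Set V) (x r : V) (a : ℕ → V) (l : ℕ) : Prop where
  tp : Top adj S x r
  a0 : a 0 = x
  pa : IsPth adj a l
  lp : 1 ≤ l
  px : ∀ u, adj u x ↔ u = a l ∨ u = r
  eS : ∀ v, v ∈ S ↔ ∃ t, t ≤ l ∧ v = a t

theorem base_P {S : Set V} {x r : V} {a : ℕ → V} {l : ℕ} (h : Base adj S x r a l) :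
    Pp adj C S x (l + 1) := by
  intro s hs
  by_cases hx : St adj C s x
  · refine ⟨s, Rch.refl _ _, fun _ _ => rfl, fun v hv => ?_⟩
    by_cases e : v = x
    · rw [e]; exact hx
    · exact hs v hv e
  obtain ⟨hum, u, hu, huC⟩ := not_St hx
  have hne : ∀ t, 1 ≤ t → t ≤ l → a t ≠ x := fun t h1 h2 e => by
    rw [← h.a0] at e
    have := h.pa.2 _ _ h2 (by omega) e
    omega
  have hrne : r ≠ x := fun e => h.tp.nr (e ▸ h.tp.mem)
  set s1 := Function.update s x (s u) with hs1
  obtain ⟨s2, hr, hoff, hst, hend⟩ := sweep (C := C) a l h.pa s1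
  have hx2 : s2 x = s u := by
    rw [hoff x fun t h1 h2 e => hne t h1 h2 e.symm, hs1, Function.update_self]
  refine ⟨s2, ((Rch.one ⟨x, u, hu, hum, huC, rfl⟩).trans hr).mono (by omega), ?_, ?_⟩
  · intro v hv
    rw [hoff v fun t h1 h2 e => hv ((h.eS v).2 ⟨t, h2, e⟩)]
    exact Function.update_of_ne (fun e => hv (by rw [e]; exact h.tp.mem)) _ _
  · intro v hv
    obtain ⟨t, ht, rfl⟩ := (h.eS v).1 hv
    rcases Nat.eq_zero_or_pos t with h0 | h0
    · subst h0
      rw [h.a0]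
      left
      rcases (h.px u).1 hu with e | e
      · refine ⟨a l, (h.px _).2 (Or.inl rfl), ?_⟩
        have hal : s1 (a l) = s u := by
          rw [hs1, Function.update_of_ne (hne l h.lp le_rfl), e]
        have ha0 : s1 (a 0) = s u := by rw [h.a0, hs1, Function.update_self]
        rw [hx2]
        refine (hend ?_).elim (fun h => ?_) (fun h => ?_)
        rotate_left
        · rw [h, hal]
        · rw [h, ha0]
        · intro t h1 h2
          refine (hs (a t) ((h.eS _).2 ⟨t, h2, rfl⟩) (hne t (by omega) h2)).congr
            (Function.update_of_ne (hne t (by omega) h2) _ _) ?_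
          intro w hw
          obtain ⟨t, rfl⟩ : ∃ t', t = t' + 1 := ⟨t - 1, by omega⟩
          rw [(h.pa.1 t (by omega) w).1 hw]
          exact Function.update_of_ne (hne t (by omega) (by omega)) _ _
      · refine ⟨r, h.tp.adj_r, ?_⟩
        rw [hx2, e, hoff r fun t h1 h2 e => h.tp.nr ((h.eS _).2 ⟨t, h2, e⟩)]
        exact Function.update_of_ne hrne _ _
    · exact hst t h0 ht

theorem base_Q {S : Set V} {x r : V} {a : ℕ → V} {l : ℕ} (h : Base adj S x r a l) :
    Qp adj C S (l + (l + 1)) := by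
  intro s
  obtain ⟨s2, hr, hoff, hst, -⟩ := sweep (C := C) a l h.pa s
  obtain ⟨s3, hr3, hoff3, hst3⟩ := base_P h s2 (by
    intro v hv hvx
    obtain ⟨t, ht, rfl⟩ := (h.eS v).1 hv
    refine hst t ?_ ht
    rcases Nat.eq_zero_or_pos t with h0 | h0
    · subst h0; exact absurd h.a0 hvx
    · exact h0)
  refine ⟨s3, hr.trans hr3, fun v hv => ?_, hst3⟩
  rw [hoff3 v hv, hoff v fun t h1 h2 e => hv ((h.eS v).2 ⟨t, h2, e⟩)]

structure Ext (adj : V → V → Prop) (S S' : Set V) (x y r r' : V) (a d : ℕ → V) (l l' : ℕ) :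
    Prop where
  tp : Top adj S x r
  tp' : Top adj S' y r'
  a0 : a 0 = x
  d0 : d 0 = y
  dr : d l' = r
  pa : IsPth adj a l
  pd : IsPth adj d l'
  py : ∀ u, adj u y ↔ u = a l ∨ u = r'
  naS : ∀ t, 1 ≤ t → t ≤ l → a t ∉ S
  ndS : ∀ t, t ≤ l' → d t ∉ S
  nad : ∀ t t', t ≤ l → t' ≤ l' → a t ≠ d t'
  eS : ∀ v, v ∈ S' ↔ v ∈ S ∨ (∃ t, 1 ≤ t ∧ t ≤ l ∧ v = a t) ∨ (∃ t, t ≤ l' ∧ v = d t)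

/-- sweep `d`, fix `S`, sweep `a`. -/
theorem ext_mid {S S' : Set V} {x y r r' : V} {a d : ℕ → V} {l l' B : ℕ}
    (h : Ext adj S S' x y r r' a d l l') (hP : Pp adj C S x B) (s : V → M)
    (hs : ∀ v, v ∈ S → v ≠ x → St adj C s v) :
    ∃ s', Rch adj C (l' + B + l) s s' ∧ (∀ v, v ∉ S' → s' v = s v) ∧ s' y = s y ∧
      (∀ v, v ∈ S' → v ≠ y → St adj C s' v) ∧
      ((∀ t, 2 ≤ t → t ≤ l → St adj C s (a t)) → s' (a l) = s (a l) ∨ s' (a l) = s' x) := by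
  obtain ⟨s2, hr2, hoff2, hst2, -⟩ := sweep (C := C) d l' h.pd s
  have S2 : ∀ v, v ∈ S → s2 v = s v := fun v hv =>
    hoff2 v fun t h1 h2 e => h.ndS t h2 (e ▸ hv)
  obtain ⟨s3, hr3, hoff3, hst3⟩ := hP s2 (by
    intro v hv hvx
    exact (hs v hv hvx).congr (S2 v hv) fun u hu => S2 u (h.tp.cl v hv hvx u hu))
  obtain ⟨s4, hr4, hoff4, hst4, hend⟩ := sweep (C := C) a l h.pa s3
  have S4 : ∀ v, v ∈ S → s4 v = s3 v := fun v hv =>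
    hoff4 v fun t h1 h2 e => h.naS t h1 h2 (e ▸ hv)
  have d4 : ∀ t, t ≤ l' → s4 (d t) = s3 (d t) := fun t ht =>
    hoff4 _ fun t' h1 h2 e => h.nad t' t h2 ht e.symm
  have d3 : ∀ t, t ≤ l' → s3 (d t) = s2 (d t) := fun t ht => hoff3 _ (h.ndS t ht)
  have a3 : ∀ t, 1 ≤ t → t ≤ l → s3 (a t) = s (a t) := fun t h1 h2 => by
    rw [hoff3 _ (h.naS t h1 h2), hoff2 _ fun t' h1 h2' => h.nad t t' h2 h2']
  refine ⟨s4, (hr2.trans hr3).trans hr4, ?_, ?_, ?_, ?_⟩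
  · intro v hv
    rw [hoff4 v fun t h1 h2 e => hv ((h.eS v).2 (Or.inr (Or.inl ⟨t, h1, h2, e⟩))),
      hoff3 v fun hS => hv ((h.eS v).2 (Or.inl hS)),
      hoff2 v fun t h1 h2 e => hv ((h.eS v).2 (Or.inr (Or.inr ⟨t, h2, e⟩)))]
  · rw [← h.d0, d4 0 (by omega), d3 0 (by omega)]
    apply hoff2
    intro t h1 h2 e
    have := h.pd.2 _ _ (by omega) h2 e
    omega
  · intro v hv hvy
    rcases (h.eS v).1 hv with hS | ⟨t, h1, h2, rfl⟩ | ⟨t, h2, rfl⟩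
    · refine (hst3 v hS).congr (S4 v hS) fun u hu => ?_
      by_cases e : v = x
      · subst e
        rcases h.tp.top u hu with hu | rfl
        · exact S4 u hu
        · rw [← h.dr]; exact d4 _ le_rfl
      · exact S4 u (h.tp.cl v hS e u hu)
    · exact hst4 t h1 h2
    · obtain ⟨t, rfl⟩ : ∃ t', t = t' + 1 := ⟨t - 1, by
        rcases Nat.eq_zero_or_pos t with h0 | h0
        · subst h0; exact absurd h.d0 hvy
        · omega⟩
      refine (hst2 (t + 1) (by omega) h2).congr (by rw [d4 _ h2, d3 _ h2]) fun u hu => ?_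
      rw [(h.pd.1 t (by omega) u).1 hu, d4 t (by omega), d3 t (by omega)]
  · intro hst
    rcases Nat.eq_zero_or_pos l with h0 | h0
    · subst h0; right; rw [h.a0]
    refine (hend ?_).elim (fun e => ?_) (fun e => ?_)
    rotate_left
    · left; rw [e, a3 l h0 le_rfl]
    · right; rw [e, h.a0, S4 x h.tp.mem]
    · intro t h1 h2
      obtain ⟨t, rfl⟩ : ∃ t', t = t' + 1 := ⟨t - 1, by omega⟩
      refine (hst _ h1 h2).congr (a3 _ (by omega) h2) fun u hu => ?_
      rw [(h.pa.1 t (by omega) u).1 hu, a3 t (by omega) (by omega)]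

theorem ext_P {S S' : Set V} {x y r r' : V} {a d : ℕ → V} {l l' B : ℕ}
    (h : Ext adj S S' x y r r' a d l l') (hP : Pp adj C S x B) :
    Pp adj C S' y (B + 2 * (l + l' + 1)) := by
  intro s hs
  by_cases hy : St adj C s y
  · refine ⟨s, Rch.refl _ _, fun _ _ => rfl, fun v hv => ?_⟩
    by_cases e : v = y
    · rw [e]; exact hy
    · exact hs v hv e
  obtain ⟨hum, u0, hu0, huC0⟩ := not_St hy
  have hyS : y ∉ S := h.d0 ▸ h.ndS 0 (by omega)
  have hSS : ∀ v, v ∈ S → v ∈ S' := fun v hv => (h.eS v).2 (Or.inl hv)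
  have hay : ∀ t, t ≤ l → a t ≠ y := fun t ht => h.d0 ▸ h.nad t 0 ht (by omega)
  have haS : ∀ t, 1 ≤ t → t ≤ l → a t ∈ S' := fun t h1 h2 =>
    (h.eS _).2 (Or.inr (Or.inl ⟨t, h1, h2, rfl⟩))
  have hr'y : r' ≠ y := fun e => h.tp'.nr (e ▸ h.tp'.mem)
  -- choose which predecessor to follow
  obtain ⟨u, hu, huC, hpref⟩ : ∃ u, adj u y ∧ s u ∈ C y ∧ (u = r' ∨ (u = a l ∧ s r' ∉ C y)) := by
    by_cases hc : s r' ∈ C y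
    · exact ⟨r', h.tp'.adj_r, hc, Or.inl rfl⟩
    · rcases (h.py u0).1 hu0 with rfl | rfl
      · exact ⟨_, hu0, huC0, Or.inr ⟨rfl, hc⟩⟩
      · exact absurd huC0 hc
  set s1 := Function.update s y (s u) with hs1
  have hne1 : ∀ v, v ≠ y → s1 v = s v := fun v hv => Function.update_of_ne hv _ _
  have R1 : Rch adj C 1 s s1 := Rch.one ⟨y, u, hu, hum, huC, rfl⟩
  obtain ⟨s4, hr4, hoff4, hy4, hst4, hend⟩ := ext_mid h hP s1 (by
    intro v hv hvx
    have hvy : v ≠ y := fun e => hyS (e ▸ hv)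
    exact (hs v (hSS v hv) hvy).congr (hne1 v hvy) fun w hw =>
      hne1 w fun e => hyS (e ▸ h.tp.cl v hv hvx w hw))
  have hr'4 : s4 r' = s r' := by rw [hoff4 r' h.tp'.nr, hne1 r' hr'y]
  have hoffs : ∀ v, v ∉ S' → s4 v = s v := fun v hv => by
    rw [hoff4 v hv, hne1 v fun e => hv (e ▸ h.tp'.mem)]
  have hyv : s4 y = s u := by rw [hy4, hs1, Function.update_self]
  have R4 := R1.trans hr4
  by_cases hy4s : St adj C s4 y
  · refine ⟨s4, R4.mono (by omega), hoffs, fun v hv => ?_⟩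
    by_cases e : v = y
    · rw [e]; exact hy4s
    · exact hst4 v hv e
  rcases hpref with rfl | ⟨rfl, hrC⟩
  · exact absurd (Or.inl ⟨u, h.tp'.adj_r, by rw [hr'4, hyv]⟩) hy4s
  have hendx : s4 (a l) = s4 x := by
    refine (hend ?_).elim (fun e => ?_) (fun e => ?_)
    rotate_left
    · exfalso
      apply hy4s
      exact Or.inl ⟨a l, hu, by rw [e, hyv, hne1 _ (hay l le_rfl)]⟩
    · exact e
    · intro t h1 h2
      obtain ⟨t, rfl⟩ : ∃ t', t = t' + 1 := ⟨t - 1, by omega⟩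
      refine (hs _ (haS _ (by omega) h2) (hay _ h2)).congr (hne1 _ (hay _ h2)) fun w hw => ?_
      rw [(h.pa.1 t (by omega) w).1 hw, hne1 _ (hay _ (by omega))]
  obtain ⟨hum4, u4, hu4, huC4⟩ := not_St hy4s
  have : u4 = a l := by
    rcases (h.py u4).1 hu4 with e | e
    · exact e
    · rw [e, hr'4] at huC4; exact absurd huC4 hrC
  subst this
  set s5 := Function.update s4 y (s4 (a l)) with hs5
  have hne5 : ∀ v, v ≠ y → s5 v = s4 v := fun v hv => Function.update_of_ne hv _ _
  have R5 : Rch adj C 1 s4 s5 := Rch.one ⟨y, a l, hu4, hum4, huC4, rfl⟩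
  obtain ⟨s6, hr6, hoff6, hst6, hend6⟩ := sweep (C := C) d l' h.pd s5
  have hdy : ∀ t, 1 ≤ t → t ≤ l' → d t ≠ y := fun t h1 h2 e => by
    rw [← h.d0] at e
    have := h.pd.2 _ _ h2 (by omega) e
    omega
  have hS6 : ∀ v, v ∈ S → s6 v = s4 v := fun v hv => by
    rw [hoff6 v fun t h1 h2 e => h.ndS t h2 (e ▸ hv), hne5 v fun e => hyS (e ▸ hv)]
  have ha6 : ∀ t, t ≤ l → s6 (a t) = s4 (a t) := fun t ht => by
    rw [hoff6 _ fun t' h1 h2 => h.nad t t' ht h2, hne5 _ (hay t ht)]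
  have hy6 : s6 y = s4 (a l) := by
    rw [hoff6 y fun t h1 h2 e => hdy t h1 h2 e.symm, hs5, Function.update_self]
  refine ⟨s6, ((R4.trans R5).trans hr6).mono (by omega), ?_, ?_⟩
  · intro v hv
    rw [hoff6 v fun t h1 h2 e => hv ((h.eS v).2 (Or.inr (Or.inr ⟨t, h2, e⟩))),
      hne5 v fun e => hv (e ▸ h.tp'.mem), hoffs v hv]
  · intro v hv
    rcases (h.eS v).1 hv with hS | ⟨t, h1, h2, rfl⟩ | ⟨t, h2, rfl⟩
    · have hvy : v ≠ y := fun e => hyS (e ▸ hS)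
      by_cases e : v = x
      · subst e
        have hx6 : s6 v = s4 (a l) := by rw [hS6 v hS, hendx]
        by_cases hrr : s6 r = s4 (a l)
        · exact Or.inl ⟨r, h.tp.adj_r, by rw [hrr, hx6]⟩
        · have : s6 r = s4 r := by
            rcases Nat.eq_zero_or_pos l' with h0 | h0
            · subst h0
              exfalso; apply hrr
              rw [← h.dr, h.d0, hy6]
            refine (hend6 ?_).elim (fun e => ?_) (fun e => ?_)
            rotate_left
            · rw [← h.dr, e, hne5 _ (hdy _ h0 le_rfl)]
            · exfalso; apply hrr
              rw [← h.dr, e, h.d0, hs5, Function.update_self]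
            · intro t h1 h2
              obtain ⟨t, rfl⟩ : ∃ t', t = t' + 1 := ⟨t - 1, by omega⟩
              refine (hst4 _ ((h.eS _).2 (Or.inr (Or.inr ⟨_, h2, rfl⟩))) (hdy _ (by omega) h2)).congr
                (hne5 _ (hdy _ (by omega) h2)) fun w hw => ?_
              rw [(h.pd.1 t (by omega) w).1 hw, hne5 _ (hdy _ (by omega) (by omega))]
          refine (hst4 v hv hvy).congr (hS6 v hS) fun w hw => ?_
          rcases h.tp.top w hw with hw | rfl
          · exact hS6 w hw
          · exact this
      · exact (hst4 v hv hvy).congr (hS6 v hS) fun w hw => hS6 w (h.tp.cl v hS e w hw)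
    · obtain ⟨t, rfl⟩ : ∃ t', t = t' + 1 := ⟨t - 1, by omega⟩
      refine (hst4 _ hv (hay _ h2)).congr (ha6 _ h2) fun w hw => ?_
      rw [(h.pa.1 t (by omega) w).1 hw, ha6 _ (by omega)]
    · rcases Nat.eq_zero_or_pos t with h0 | h0
      · subst h0
        rw [h.d0]
        exact Or.inl ⟨a l, hu4, by rw [hy6, ha6 l le_rfl]⟩
      · exact hst6 t h0 h2

theorem ext_Q {S S' : Set V} {x y r r' : V} {a d : ℕ → V} {l l' B D : ℕ}
    (h : Ext adj S S' x y r r' a d l l') (hP : Pp adj C S x B) (hQ : Qp adj C S D) :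
    Qp adj C S' (D + (l' + B + l) + (B + 2 * (l + l' + 1))) := by
  intro s
  obtain ⟨s1, hr1, hoff1, hst1⟩ := hQ s
  obtain ⟨s2, hr2, hoff2, -, hst2, -⟩ := ext_mid h hP s1 fun v hv _ => hst1 v hv
  obtain ⟨s3, hr3, hoff3, hst3⟩ := ext_P h hP s2 hst2
  refine ⟨s3, (hr1.trans hr2).trans hr3, fun v hv => ?_, hst3⟩
  rw [hoff3 v hv, hoff2 v hv, hoff1 v fun hS => hv ((h.eS v).2 (Or.inl hS))]

theorem final_Q {S : Set V} {x r : V} {b : ℕ → V} {l B D : ℕ}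
    (tp : Top adj S x r) (b0 : b 0 = x) (br : b l = r) (pb : IsPth adj b l)
    (nbS : ∀ t, 1 ≤ t → t ≤ l → b t ∉ S) 
    (all : ∀ v, v ∈ S ∨ ∃ t, 1 ≤ t ∧ t ≤ l ∧ v = b t)
    (hP : Pp adj C S x B) (hQ : Qp adj C S D) (s : V → M) :
    ∃ s', Rch adj C (D + l + B + l) s s' ∧ ∀ v, St adj C s' v := by
  obtain ⟨s1, hr1, hoff1, hst1⟩ := hQ s
  obtain ⟨s2, hr2, hoff2, hst2, -⟩ := sweep (C := C) b l pb s1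
  have S2 : ∀ v, v ∈ S → s2 v = s1 v := fun v hv =>
    hoff2 v fun t h1 h2 e => nbS t h1 h2 (e ▸ hv)
  obtain ⟨s3, hr3, hoff3, hst3⟩ := hP s2 fun v hv hvx =>
    (hst1 v hv).congr (S2 v hv) fun u hu => S2 u (tp.cl v hv hvx u hu)
  obtain ⟨s4, hr4, hoff4, hst4, hend⟩ := sweep (C := C) b l pb s3
  have S4 : ∀ v, v ∈ S → s4 v = s3 v := fun v hv =>
    hoff4 v fun t h1 h2 e => nbS t h1 h2 (e ▸ hv)
  refine ⟨s4, ((hr1.trans hr2).trans hr3).trans hr4, fun v => ?_⟩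
  rcases all v with hv | ⟨t, h1, h2, rfl⟩
  · by_cases e : v = x
    · subst e
      have : s4 r = s3 r ∨ s4 r = s3 v := by
        rw [← br, ← b0]
        apply hend
        intro t h1 h2
        obtain ⟨t, rfl⟩ : ∃ t', t = t' + 1 := ⟨t - 1, by omega⟩
        refine (hst2 _ (by omega) h2).congr (hoff3 _ (nbS _ (by omega) h2)) fun w hw => ?_
        rw [(pb.1 t (by omega) w).1 hw]
        exact hoff3 _ (nbS _ (by omega) (by omega))
      rcases this with h | h
      · refine (hst3 v hv).congr (S4 v hv) fun u hu => ?_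
        rcases tp.top u hu with hu | rfl
        · exact S4 u hu
        · exact h
      · exact Or.inl ⟨r, tp.adj_r, by rw [h, S4 v hv]⟩
    · exact (hst3 v hv).congr (S4 v hv) fun u hu => S4 u (tp.cl v hv e u hu)
  · exact hst4 t h1 h2

theorem Stp.valid {s t : V → M} (h : Stp adj C s t) (hv : Valid C s) : Valid C t := by
  obtain ⟨v, u, _, _, hc, rfl⟩ := h
  intro i
  by_cases e : i = v
  · subst e; rw [Function.update_self]; exact hc
  · rw [Function.update_of_ne e]; exact hv i

theorem payoff_eq_s6 [Fintype V] (s : V → M) (i : V) :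
    payoff adj (fun _ _ => 1) (fun _ _ => 0) s i =
      ((Finset.univ.filter (fun j => adj j i ∧ s j = s i)).card : ℝ) := by
  simp [payoff]

theorem Stp.uni [Fintype V] {s t : V → M} (h : Stp adj C s t) (hv : Valid C s) :
    UniDev adj (fun _ _ => 1) (fun _ _ => 0) C s t := by
  have hvt := h.valid hv
  obtain ⟨v, u, hu, hum, hc, rfl⟩ := h
  have huv : u ≠ v := fun e => hum u hu (by rw [e])
  refine ⟨⟨hvt, ?_, ?_⟩, v, fun j hj => (Function.update_of_ne hj _ _).symm⟩
  · intro e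
    have := congrFun e v
    rw [Function.update_self] at this
    exact hum u hu this.symm
  · intro i hi
    have : i = v := by
      by_contra e
      exact hi (Function.update_of_ne e _ _).symm
    subst this
    rw [payoff_eq_s6, payoff_eq_s6]
    norm_cast
    apply Finset.card_lt_card
    rw [Finset.ssubset_iff_of_subset]
    · refine ⟨u, ?_, ?_⟩
      · simp [hu, Function.update_of_ne huv]
      · simp [hu, hum u hu]
    · intro w hw
      simp only [Finset.mem_filter] at hw
      exact absurd hw.2.2 (hum w hw.2.1)

theorem nash_of [Fintype V] {s : V → M} (hv : Valid C s) (hs : ∀ v, St adj C s v)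
    (h2 : ∀ v, ¬ adj v v ∧ ∃ l r, ∀ u, adj u v → u = l ∨ u = r) :
    IsNash adj (fun _ _ => 1) (fun _ _ => 0) C s := by
  refine ⟨hv, ?_⟩
  rintro s' ⟨⟨hv', hne, hp⟩, i, hi⟩
  have hii : s i ≠ s' i := fun e => hne (funext fun j => by
    by_cases h : j = i
    · rw [h, e]
    · exact hi j h)
  have := hp i hii
  rw [payoff_eq_s6, payoff_eq_s6] at this
  norm_cast at this
  obtain ⟨hirr, l, r, hlr⟩ := h2 i
  have hpr : ∀ u, adj u i → s u = s' u := fun u hu => hi u fun e => hirr (e ▸ hu)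
  rcases hs i with ⟨w, hw, e⟩ | hst
  · have h1 : 1 ≤ (Finset.univ.filter (fun j => adj j i ∧ s j = s i)).card :=
      Finset.card_pos.2 ⟨w, by simp [hw, e]⟩
    have h3 : (Finset.univ.filter (fun j => adj j i ∧ s' j = s' i)).card ≤ 1 := by
      rw [Finset.card_le_one]
      have hw' : s' w ≠ s' i := fun e' => hii (by rw [← e, hpr w hw, e'])
      intro p hp q hq
      simp only [Finset.mem_filter, Finset.mem_univ, true_and] at hp hq
      have e1 : p ≠ w := fun e => hw' (e ▸ hp.2)
      have e2 : q ≠ w := fun e => hw' (e ▸ hq.2)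
      have := hlr p hp.1
      have := hlr q hq.1
      have := hlr w hw
      grind
    omega
  · have h0 : (Finset.univ.filter (fun j => adj j i ∧ s' j = s' i)).card = 0 := by
      rw [Finset.card_eq_zero, Finset.filter_eq_empty_iff]
      rintro u - ⟨hu, e⟩
      apply hst u hu
      rw [hpr u hu, e]
      exact hv' i
    omega

theorem imp_of_rch [Fintype V] {B : ℕ} {s t : V → M} (h : Rch adj C B s t) (hv : Valid C s)
    (hN : Valid C t → IsNash adj (fun _ _ => 1) (fun _ _ => 0) C t) :
    ∃ L, L ≤ B ∧ ImpPath adj (fun _ _ => 1) (fun _ _ => 0) C s L := by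
  induction h with
  | refl B s => exact ⟨0, by omega, fun _ => s, rfl, fun t ht => by omega, hN hv⟩
  | step B s t u h _ ih =>
    obtain ⟨L, hL, σ, h0, hσ, hn⟩ := ih (h.valid hv) hN
    refine ⟨L + 1, by omega, fun i => Nat.casesOn i s σ, rfl, ?_, hn⟩
    intro i hi
    cases i with
    | zero => 
      change UniDev _ _ _ _ s (σ 0)
      rw [h0]; exact h.uni hv
    | succ i => exact hσ i (by omega)

end helper

section inst
variable {V : Type} {m n : ℕ} {node : ℕ → ℕ → V} {k : ℕ → ℕ}

def prv (n i : ℕ) : ℕ := if i = 0 then n - 1 else i - 1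

theorem prv_lt {n i : ℕ} (h : i < n) : prv n i < n := by
  unfold prv; split <;> omega

theorem prv_succ {n i : ℕ} (h : i < n) : (prv n i + 1) % n = i := by
  unfold prv
  split
  · have : n - 1 + 1 = n := by omega
    rw [this, Nat.mod_self]; omega
  · have : i - 1 + 1 = i := by omega
    rw [this, Nat.mod_eq_of_lt h]

theorem prv_mod {n i : ℕ} (h : i < n) : prv n ((i + 1) % n) = i := by
  unfold prv
  rcases Nat.lt_or_ge (i + 1) n with h1 | h1
  · rw [Nat.mod_eq_of_lt h1]; simp
  · have : i + 1 = n := by omega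
    rw [this, Nat.mod_self]; simp; omega

theorem adj_iff_s6 (h : IsOpenChain m n node k) {j i : ℕ} (hj : j < m) (hi : i < n) (u : V) :
    chainAdj m n node u (node j i) ↔ u = node j (prv n i) ∨
      (i = 0 ∧ j + 1 < m ∧ u = node (j + 1) (k j - 1)) ∨
      (∃ j', j = j' + 1 ∧ i = k j' ∧ u = node j' (n - 1)) := by
  obtain ⟨hm, hn, hk, hsh, hinj, hall⟩ := h
  constructor
  · rintro ⟨j1, i1, hj1, hi1, rfl, hv⟩
    have hlt : (i1 + 1) % n < n := Nat.mod_lt _ (by omega)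
    rcases hinj _ _ _ _ hj hi hj1 hlt hv with ⟨rfl, e⟩ | ⟨rfl, e1, e2⟩ | ⟨e0, e1, e2⟩
    · left; rw [e, prv_mod hi1]
    · right; left
      refine ⟨e1, hj1, ?_⟩
      have := prv_mod hi1
      have hk' := hk j hj1
      rw [e2] at this
      rw [← this]
      unfold prv
      rw [if_neg (by omega)]
    · right; right
      refine ⟨j1, e0, e2, ?_⟩
      have := prv_mod hi1
      rw [e1] at this
      rw [← this]
      simp [prv]
  · rintro (rfl | ⟨rfl, h1, rfl⟩ | ⟨j', rfl, rfl, rfl⟩)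
    · exact ⟨j, prv n i, hj, prv_lt hi, rfl, by rw [prv_succ hi]⟩
    · have hk' := hk j h1
      refine ⟨j + 1, k j - 1, h1, by omega, rfl, ?_⟩
      have : k j - 1 + 1 = k j := by omega
      rw [this, Nat.mod_eq_of_lt hk'.2]
      exact hsh j h1
    · refine ⟨j', n - 1, by omega, by omega, rfl, ?_⟩
      have : n - 1 + 1 = n := by omega
      rw [this, Nat.mod_self]
      exact (hsh j' hj).symm

/-- unshared node -/
theorem adj_iff_un (h : IsOpenChain m n node k) {j i : ℕ} (hj : j < m) (hi : i < n)
    (h0 : i = 0 → ¬ j + 1 < m) (h1 : ∀ j', j = j' + 1 → i ≠ k j') (u : V) :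
    chainAdj m n node u (node j i) ↔ u = node j (prv n i) := by
  rw [adj_iff_s6 h hj hi]
  constructor
  · rintro (e | ⟨e, e', _⟩ | ⟨j', e, e', _⟩)
    · exact e
    · exact absurd e' (h0 e)
    · exact absurd e' (h1 j' e)
  · exact Or.inl

theorem adj_iff_top (h : IsOpenChain m n node k) {j : ℕ} (hj : j + 1 < m) (u : V) :
    chainAdj m n node u (node j 0) ↔ u = node j (n - 1) ∨ u = node (j + 1) (k j - 1) := by
  have hn := h.2.1
  rw [adj_iff_s6 h (by omega) (by omega)]
  constructor
  · rintro (e | ⟨e, e', e2⟩ | ⟨j', e, e', _⟩)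
    · exact Or.inl (by simpa [prv] using e)
    · exact Or.inr e2
    · have := h.2.2.1 j' (by omega)
      omega
  · rintro (e | e)
    · exact Or.inl (by simpa [prv] using e)
    · exact Or.inr (Or.inl ⟨rfl, hj, e⟩)

def seg (n : ℕ) (node : ℕ → ℕ → V) (j : ℕ) : Set V := {v | ∃ j' i, j' ≤ j ∧ i < n ∧ v = node j' i}

theorem not_mem_seg (h : IsOpenChain m n node k) {j i : ℕ} (hj : j + 1 < m) (hi : i < n)
    (hk : i ≠ k j) : node (j + 1) i ∉ seg n node j := by
  rintro ⟨j', i', h1, h2, e⟩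
  rcases h.2.2.2.2.1 _ _ _ _ hj hi (by omega) h2 e with e | e | e
  · omega
  · omega
  · have : j' = j := by omega
    subst this
    exact hk e.2.2

theorem inj_same (h : IsOpenChain m n node k) {j i i' : ℕ} (hj : j < m) (hi : i < n) (hi' : i' < n)
    (e : node j i = node j i') : i = i' := by
  rcases h.2.2.2.2.1 _ _ _ _ hj hi hj hi' e with e | e | e <;> omega

theorem top_seg (h : IsOpenChain m n node k) {j : ℕ} (hj : j + 1 < m) :
    Top (chainAdj m n node) (seg n node j) (node j 0) (node (j + 1) (k j - 1)) := by
  have hn := h.2.1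
  have hk := h.2.2.1 j hj
  refine ⟨⟨j, 0, le_rfl, by omega, rfl⟩, ?_, ?_, ?_, ?_⟩
  · rintro v ⟨j', i, h1, h2, rfl⟩ hne u hu
    rcases (adj_iff_s6 h (by omega) h2 u).1 hu with rfl | ⟨rfl, e, rfl⟩ | ⟨j'', rfl, e, rfl⟩
    · exact ⟨j', _, h1, prv_lt h2, rfl⟩
    · have : j' ≠ j := fun e => hne (by rw [e])
      have := h.2.2.1 j' e
      exact ⟨j' + 1, _, by omega, by omega, rfl⟩
    · exact ⟨j'', _, by omega, by omega, rfl⟩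
  · intro u hu
    rcases (adj_iff_top h hj u).1 hu with rfl | rfl
    · exact Or.inl ⟨j, _, le_rfl, by omega, rfl⟩
    · exact Or.inr rfl
  · exact (adj_iff_top h hj _).2 (Or.inr rfl)
  · exact not_mem_seg h hj (by omega) (by omega)

theorem base_inst (h : IsOpenChain m n node k) :
    Base (chainAdj m n node) (seg n node 0) (node 0 0) (node 1 (k 0 - 1)) (node 0) (n - 1) := by
  have hn := h.2.1
  have hm := h.1
  refine ⟨top_seg h (by omega), rfl, ⟨?_, ?_⟩, by omega, adj_iff_top h (by omega), ?_⟩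
  · intro t ht u
    rw [adj_iff_un h (by omega) (by omega) (by omega) (by omega)]
    simp [prv]
  · intro t u ht hu e
    exact inj_same h (by omega) (by omega) (by omega) e
  · intro v
    constructor
    · rintro ⟨j', i, h1, h2, rfl⟩
      have : j' = 0 := by omega
      subst this
      exact ⟨i, by omega, rfl⟩
    · rintro ⟨t, ht, rfl⟩
      exact ⟨0, t, le_rfl, by omega, rfl⟩

theorem ext_inst (h : IsOpenChain m n node k) {j : ℕ} (hj : j + 2 < m) :
    Ext (chainAdj m n node) (seg n node j) (seg n node (j + 1)) (node j 0) (node (j + 1) 0)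
      (node (j + 1) (k j - 1)) (node (j + 2) (k (j + 1) - 1))
      (fun t => node (j + 1) (k j + t)) (node (j + 1)) (n - 1 - k j) (k j - 1) := by
  have hn := h.2.1
  have hk := h.2.2.1 j (by omega)
  have hsh := h.2.2.2.1 j (by omega)
  refine ⟨top_seg h (by omega), top_seg h hj, hsh.symm, rfl, rfl, ⟨?_, ?_⟩, ⟨?_, ?_⟩, ?_, ?_, ?_, ?_, ?_⟩
  · intro t ht u
    try dsimp only
    rw [adj_iff_un h (by omega) (by omega) (by omega) ?_]
    · have : prv n (k j + (t + 1)) = k j + t := by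
        unfold prv; rw [if_neg (by omega)]; omega
      rw [this]
    · intro j' e
      have : j = j' := by omega
      subst this; omega
  · intro t u ht hu e
    have := inj_same h (by omega) (by omega) (by omega) e
    omega
  · intro t ht u
    rw [adj_iff_un h (by omega) (by omega) (by omega) ?_]
    · simp [prv]
    · intro j' e
      have : j = j' := by omega
      subst this; omega
  · intro t u ht hu e
    exact inj_same h (by omega) (by omega) (by omega) e
  · intro u
    rw [adj_iff_top h hj]
    have : k j + (n - 1 - k j) = n - 1 := by omega
    try dsimp only
    rw [this]
  · intro t h1 h2
    exact not_mem_seg h (by omega) (by omega) (by omega)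
  · intro t h2
    exact not_mem_seg h (by omega) (by omega) (by omega)
  · intro t t' ht ht' e
    have := inj_same h (by omega) (by omega) (by omega) e
    omega
  · intro v
    constructor
    · rintro ⟨j', i, h1, h2, rfl⟩
      rcases Nat.lt_or_ge j j' with hlt | hge
      · have : j' = j + 1 := by omega
        subst this
        rcases lt_trichotomy i (k j) with h3 | h3 | h3
        · exact Or.inr (Or.inr ⟨i, by omega, rfl⟩)
        · left
          rw [h3, ← hsh]
          exact ⟨j, 0, le_rfl, by omega, rfl⟩
        · refine Or.inr (Or.inl ⟨i - k j, by omega, by omega, ?_⟩)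
          have : k j + (i - k j) = i := by omega
          try dsimp only
          rw [this]
      · exact Or.inl ⟨j', i, hge, h2, rfl⟩
    · rintro (⟨j', i, h1, h2, rfl⟩ | ⟨t, h1, h2, rfl⟩ | ⟨t, h2, rfl⟩)
      · exact ⟨j', i, by omega, h2, rfl⟩
      · exact ⟨j + 1, _, le_rfl, by omega, rfl⟩
      · exact ⟨j + 1, _, le_rfl, by omega, rfl⟩

theorem PQ {M : Type} (h : IsOpenChain m n node k) (C : V → Finset M) (j : ℕ) (hj : j + 1 < m) :
    Pp (chainAdj m n node) C (seg n node j) (node j 0) (2 * n * (j + 1)) ∧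
    Qp (chainAdj m n node) C (seg n node j) (4 * n * (j + 1) ^ 2) := by
  have hn := h.2.1
  have Pmono : ∀ (S : Set V) (x : V) (A B : ℕ), A ≤ B → Pp (chainAdj m n node) C S x A →
      Pp (chainAdj m n node) C S x B := fun S x A B hAB hP s hs => by
    obtain ⟨s', h1, h2⟩ := hP s hs
    exact ⟨s', h1.mono hAB, h2⟩
  have Qmono : ∀ (S : Set V) (A B : ℕ), A ≤ B → Qp (chainAdj m n node) C S A →
      Qp (chainAdj m n node) C S B := fun S A B hAB hP s => by
    obtain ⟨s', h1, h2⟩ := hP s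
    exact ⟨s', h1.mono hAB, h2⟩
  induction j with
  | zero =>
    refine ⟨Pmono _ _ _ _ ?_ (base_P (base_inst h)), Qmono _ _ _ ?_ (base_Q (base_inst h))⟩
    · omega
    · omega
  | succ j ih =>
    obtain ⟨hP, hQ⟩ := ih (by omega)
    have hk := h.2.2.1 j (by omega)
    have he := ext_inst h (j := j) (by omega)
    have e1 : n - 1 - k j + (k j - 1) + 1 ≤ n := by omega
    have e2 : k j - 1 + (n - 1 - k j) ≤ n := by omega
    refine ⟨Pmono _ _ _ _ ?_ (ext_P he hP), Qmono _ _ _ ?_ (ext_Q he hP hQ)⟩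
    · nlinarith
    · nlinarith

end inst

/-- There is a constant `c` such that every coordination game without bonuses
on an unweighted open chain of `m` cycles, each cycle having `n` nodes,
admits, from every joint strategy, a finite improvement path of length at most
`c * n * m ^ 2` ending in a Nash equilibrium. -/
theorem open_chain_improvement_path :
    ∃ c : ℕ,
      ∀ (V : Type) [Fintype V] (M : Type) [Fintype M],
      ∀ (m n : ℕ) (node : ℕ → ℕ → V) (k : ℕ → ℕ),
        IsOpenChain m n node k →
      ∀ (C : V → Finset M), (∀ i, (C i).Nonempty) →
      ∀ s : V → M, Valid C s →
        ∃ L, L ≤ c * n * m ^ 2 ∧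
          ImpPath (chainAdj m n node) (fun _ _ => 1) (fun _ _ => 0) C s L := by
  refine ⟨4, ?_⟩
  intro V _ M _ m n node k h C hC s hv
  obtain ⟨N, rfl⟩ : ∃ N, m = N + 2 := ⟨m - 2, by have := h.1; omega⟩
  have hn := h.2.1
  have hk := h.2.2.1 N (by omega)
  have hsh := h.2.2.2.1 N (by omega)
  have hlt : ∀ t, (k N + t) % n < n := fun t => Nat.mod_lt _ (by omega)
  have hmi : ∀ t u, t < n → u < n → (k N + t) % n = (k N + u) % n → t = u := by
    intro t u ht hu e
    have e' : k N + t ≡ k N + u [MOD n] := e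
    have := Nat.ModEq.add_left_cancel' _ e'
    rw [Nat.ModEq, Nat.mod_eq_of_lt ht, Nat.mod_eq_of_lt hu] at this
    exact this
  have hk0 : (k N + 0) % n = k N := by rw [add_zero, Nat.mod_eq_of_lt hk.2]
  have hnk : ∀ t, 1 ≤ t → t ≤ n - 1 → (k N + t) % n ≠ k N := by
    intro t h1 h2 e
    have := hmi t 0 (by omega) (by omega) (e.trans hk0.symm)
    omega
  obtain ⟨hP, hQ⟩ := PQ h C N (by omega)
  obtain ⟨s', hr, hst⟩ := final_Q (b := fun t => node (N + 1) ((k N + t) % n)) (l := n - 1)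
    (top_seg h (j := N) (by omega)) (by rw [hk0, hsh])
    (by
      try dsimp only
      have : k N + (n - 1) = (k N - 1) + n := by omega
      rw [this, Nat.add_mod_right, Nat.mod_eq_of_lt (by omega)])
    ⟨by
      intro t ht u
      try dsimp only
      rw [adj_iff_un h (by omega) (hlt _) (by omega) ?_]
      · have : (k N + (t + 1)) % n = ((k N + t) % n + 1) % n := by
          rw [Nat.mod_add_mod]; rfl
        rw [this, prv_mod (hlt _)]
      · intro j' e
        have : N = j' := by omega
        subst this
        exact hnk _ (by omega) (by omega), by
      intro t u ht hu e
      exact hmi _ _ (by omega) (by omega) (inj_same h (by omega) (hlt _) (hlt _) e)⟩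
    (by
      intro t h1 h2
      exact not_mem_seg h (by omega) (hlt _) (hnk t h1 h2))
    (by
      intro v
      obtain ⟨j, i, hj, hi, rfl⟩ := h.2.2.2.2.2 v
      rcases Nat.lt_or_ge N j with h1 | h1
      · have : j = N + 1 := by omega
        subst this
        rcases lt_trichotomy i (k N) with h3 | h3 | h3
        · refine Or.inr ⟨n + i - k N, by omega, by omega, ?_⟩
          have : k N + (n + i - k N) = i + n := by omega
          try dsimp only
          rw [this, Nat.add_mod_right, Nat.mod_eq_of_lt hi]
        · left
          rw [h3, ← hsh]
          exact ⟨N, 0, le_rfl, by omega, rfl⟩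
        · refine Or.inr ⟨i - k N, by omega, by omega, ?_⟩
          have : k N + (i - k N) = i := by omega
          try dsimp only
          rw [this, Nat.mod_eq_of_lt hi]
      · exact Or.inl ⟨j, i, h1, hi, rfl⟩)
    hP hQ s
  refine imp_of_rch (hr.mono ?_) hv fun hv' => nash_of hv' hst ?_
  · have : n - 1 ≤ n := by omega
    nlinarith
  · intro v
    obtain ⟨j, i, hj, hi, rfl⟩ := h.2.2.2.2.2 v
    constructor
    · rw [adj_iff_s6 h hj hi]
      rintro (e | ⟨e, h1, e2⟩ | ⟨j', rfl, e1, e2⟩)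
      · have := inj_same h hj hi (prv_lt hi) e
        unfold prv at this
        split at this <;> omega
      · subst e
        have := h.2.2.1 j h1
        rw [h.2.2.2.1 j h1] at e2
        have := inj_same h h1 (by omega) (by omega) e2
        omega
      · subst e1
        rw [← h.2.2.2.1 j' hj] at e2
        have := inj_same h (by omega) (by omega) (by omega) e2
        omega
    · by_cases h0 : i = 0 ∧ j + 1 < N + 2
      · obtain ⟨rfl, h1⟩ := h0
        exact ⟨_, _, fun u => (adj_iff_top h h1 u).1⟩
      · refine ⟨node j (prv n i), node (j - 1) (n - 1), fun u hu => ?_⟩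
        rcases (adj_iff_s6 h hj hi u).1 hu with e | ⟨e, e', _⟩ | ⟨j', rfl, _, e⟩
        · exact Or.inl e
        · exact absurd ⟨e, e'⟩ h0
        · exact Or.inr e

end CG
end
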